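/- Let S be a regular system of difference fields on V over A and let I be any collection of subsets of V. Then S(V) is linearly disjoint from ∏_{v∈I} S(v)^{alg} over ∏_{v∈I} S(v). (Second linear disjointness lemma for regular systems.) -/

import Mathlib

/-- Subfields `E` and `F` of `K` containing `C` are linearly disjoint over `C`
if the multiplication map `E ⊗[C] F → K` is injective. -/
def LinearDisjointOver {K : Type*} [Field K] (C E F : Subfield K) : Prop :=
  (Submodule.span C (E : Set K)).LinearDisjoint (Submodule.span C (F : Set K))

/-- The relative algebraic closure `E^{alg}` of a subfield `E` inside `K`. -/
def algCl {K : Type*} [Field K] (E : Subfield K) : Subfield K :=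
  Subfield.closure {x : K | IsAlgebraic E x}

/-- The inversive closure `E^{inv}`: the smallest subfield of `K` containing `E`
closed under `σ` and `σ⁻¹`. -/
def invCl {K : Type*} [Field K] (σ : K ≃+* K) (E : Subfield K) : Subfield K :=
  sInf {F : Subfield K | E ≤ F ∧ (∀ x ∈ F, σ x ∈ F) ∧ ∀ x ∈ F, σ.symm x ∈ F}

/-- `E` and `F` are independent over `C`: `((E·C)^{inv})^{alg}` and
`((F·C)^{inv})^{alg}` are linearly disjoint over `(C^{inv})^{alg}`. -/
def IndependentOver {K : Type*} [Field K] (σ : K ≃+* K) (C E F : Subfield K) : Prop :=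
  LinearDisjointOver (algCl (invCl σ C)) (algCl (invCl σ (E ⊔ C))) (algCl (invCl σ (F ⊔ C)))

/-- `F ≤ E` and `E/F` is a finite Galois extension (of subfields of `K`). -/
def IsFiniteGaloisExt {K : Type*} [Field K] (F E : Subfield K) : Prop :=
  ∃ h : F ≤ E,
    letI : Algebra F E := (Subfield.inclusion h).toAlgebra
    FiniteDimensional F E ∧ IsGalois F E

/-- `I_u = {v ∩ u : v ∈ I}`. -/
def interFamily {V : Type*} [DecidableEq V] (I : Set (Finset V)) (u : Finset V) :
    Set (Finset V) :=
  {w | ∃ v ∈ I, w = v ∩ u}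

/-- A system of difference fields on `V` over `A` inside `(K, σ)`. -/
structure DiffFieldSystem {K : Type*} [Field K] (σ : K ≃+* K)
    (V : Type*) [Fintype V] [DecidableEq V] (A : Subfield K) where
  /-- the underlying map from subsets of `V` to subfields of `K` -/
  S : Finset V → Subfield K
  mono : ∀ {u v : Finset V}, u ⊆ v → S u ≤ S v
  empty_eq : S ∅ = A
  sigma_stable : ∀ u : Finset V, ∀ x ∈ S u, σ x ∈ S u
  perfect : ∀ u : Finset V, PerfectField (S u)
  /-- each `S u` has finite transcendence degree over `A` -/
  fin_trdeg : ∀ u : Finset V, ∃ t : Finset K,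
    ∀ x ∈ S u, IsAlgebraic ↥(A ⊔ Subfield.closure (t : Set K)) x
  /-- each `S u` is the perfect closure of a difference subfield generated over
  `A` by a finite set (i.e. the smallest perfect `σ`-stable subfield of `K`
  containing `A` and that finite set) -/
  fin_gen : ∀ u : Finset V, ∃ t : Finset K,
    (A ≤ S u ∧ (t : Set K) ⊆ S u) ∧
    ∀ F : Subfield K, A ≤ F → (t : Set K) ⊆ F → (∀ x ∈ F, σ x ∈ F) →
      PerfectField F → S u ≤ F
  /-- the family `(S {i})_{i ∈ V}` is independent over `A` -/
  indep : ∀ I₁ I₂ : Finset V, Disjoint I₁ I₂ →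
    IndependentOver σ A (A ⊔ ⨆ i ∈ I₁, S {i}) (A ⊔ ⨆ i ∈ I₂, S {i})
  /-- for `|u| ≥ 2`, `S u` is a finite Galois extension of
  `S(u)⁻ = ∏_{v ∈ P(u)⁻} S v` -/
  galois : ∀ u : Finset V, 2 ≤ u.card →
    IsFiniteGaloisExt (⨆ v ∈ u.powerset.erase u, S v) (S u)

namespace DiffFieldSystem

variable {K : Type*} [Field K] {σ : K ≃+* K}
variable {V : Type*} [Fintype V] [DecidableEq V] {A : Subfield K}

/-- `S(u)⁻ = ∏_{v ∈ P(u)⁻} S(v)`. -/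
def Sminus (𝒮 : DiffFieldSystem σ V A) (u : Finset V) : Subfield K :=
  ⨆ v ∈ u.powerset.erase u, 𝒮.S v

/-- `𝒮` is an `I`-system: `S u = S(u)⁻` for `u ∉ I`. -/
def IsOn (𝒮 : DiffFieldSystem σ V A) (I : Set (Finset V)) : Prop :=
  ∀ u : Finset V, u ∉ I → 𝒮.S u = 𝒮.Sminus u

/-- `𝒮` is regular: for every nonempty `u`, `S u` is linearly disjoint from
`∏_{v ∈ P(u)⁻} S(v)^{alg}` over `∏_{v ∈ P(u)⁻} S(v)`. -/
def Regular (𝒮 : DiffFieldSystem σ V A) : Prop :=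
  ∀ u : Finset V, u ≠ ∅ →
    LinearDisjointOver (𝒮.Sminus u) (𝒮.S u) (⨆ v ∈ u.powerset.erase u, algCl (𝒮.S v))

end DiffFieldSystem

/-- `I` is a simplicial complex on `V`: downward closed with union all of `V`. -/
def IsSimplicialComplexOn (V : Type*) [DecidableEq V] (I : Set (Finset V)) : Prop :=
  (∀ u ∈ I, ∀ v : Finset V, v ⊆ u → v ∈ I) ∧ ∀ i : V, ∃ u ∈ I, i ∈ u

open Polynomial

universe uK

section basic
variable {K : Type uK} [Field K]

lemma isAlg_mono {E F : Subfield K} (h : E ≤ F) {x : K} (hx : IsAlgebraic E x) :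
    IsAlgebraic F x := by
  let _ : Algebra E F := (Subfield.inclusion h).toAlgebra
  have : IsScalarTower E F K := IsScalarTower.of_algebraMap_eq fun _ => rfl
  exact hx.tower_top F

lemma algCl_eq (E : Subfield K) : algCl E = (algebraicClosure E K).toSubfield := by
  apply le_antisymm
  · refine Subfield.closure_le.2 fun x hx => ?_
    exact mem_algebraicClosure_iff.2 hx
  · intro x hx
    exact Subfield.subset_closure (mem_algebraicClosure_iff.1 hx)

lemma mem_algCl {E : Subfield K} {x : K} : x ∈ algCl E ↔ IsAlgebraic E x := by
  rw [algCl_eq]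
  exact mem_algebraicClosure_iff

lemma le_algCl (E : Subfield K) : E ≤ algCl E := fun x hx =>
  mem_algCl.2 (isAlgebraic_algebraMap (⟨x, hx⟩ : E))

lemma algCl_mono {E F : Subfield K} (h : E ≤ F) : algCl E ≤ algCl F := fun _ hx =>
  mem_algCl.2 (isAlg_mono h (mem_algCl.1 hx))

lemma algCl_algCl (E : Subfield K) : algCl (algCl E) ≤ algCl E := by
  intro x hx
  rw [mem_algCl] at hx ⊢
  let _ : Algebra E (algCl E) := (Subfield.inclusion (le_algCl E)).toAlgebra
  have : IsScalarTower E (algCl E) K := IsScalarTower.of_algebraMap_eq fun _ => rfl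
  have : Algebra.IsAlgebraic E (algCl E) := by
    refine ⟨fun y => ?_⟩
    have h1 : IsAlgebraic E (y : K) := mem_algCl.1 y.2
    exact (isAlgebraic_algebraMap_iff (algebraMap (algCl E) K).injective).1 h1
  exact hx.restrictScalars E

lemma isAlgClosed_algCl [IsAlgClosed K] (E : Subfield K) : IsAlgClosed (algCl E) := by
  have h : IsAlgClosed (algebraicClosure E K) :=
    (algebraicClosure.isAlgClosure (F := E) (E := K)).isAlgClosed
  rw [algCl_eq]
  exact h

/-- families in `F` independent over `C` stay independent over `E`. -/
def LD (C E F : Subfield K) : Prop :=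
  ∀ (ι : Type uK) (f : ι → K), (∀ i, f i ∈ F) → LinearIndependent C f → LinearIndependent E f

/-- `E` as a `C`-subalgebra. -/
def subAlg {C E : Subfield K} (h : C ≤ E) : Subalgebra C K :=
  { E.toSubring with algebraMap_mem' := fun r => h r.2 }

lemma mem_subAlg {C E : Subfield K} (h : C ≤ E) {x : K} : x ∈ subAlg h ↔ x ∈ E := Iff.rfl

lemma span_eq {C E : Subfield K} (h : C ≤ E) :
    Submodule.span C (E : Set K) = Subalgebra.toSubmodule (subAlg h) :=
  Submodule.span_eq (Subalgebra.toSubmodule (subAlg h))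

lemma ldo_iff {C E F : Subfield K} (hE : C ≤ E) (hF : C ≤ F) :
    LinearDisjointOver C E F ↔ (subAlg hE).LinearDisjoint (subAlg hF) := by
  unfold LinearDisjointOver
  rw [span_eq hE, span_eq hF]

lemma ld_of_ldo {C E F : Subfield K} (hE : C ≤ E) (hF : C ≤ F) (h : LinearDisjointOver C E F) :
    LD C E F := by
  intro ι f hf hli
  rw [ldo_iff hE hF] at h
  have h1 : LinearIndependent C (fun i => (⟨f i, hf i⟩ : subAlg hF)) :=
    LinearIndependent.of_comp (subAlg hF).val.toLinearMap hli
  exact h.linearIndependent_right_of_flat h1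

lemma ldo_of_ld {C E F : Subfield K} (hE : C ≤ E) (hF : C ≤ F) (h : LD C E F) :
    LinearDisjointOver C E F := by
  rw [ldo_iff hE hF]
  let b := Module.Basis.ofVectorSpace C (subAlg hF)
  refine Subalgebra.LinearDisjoint.of_basis_right _ _ b ?_
  refine h _ _ (fun i => (b i).2) ?_
  exact b.linearIndependent.map' (subAlg hF).val.toLinearMap
    (LinearMap.ker_eq_bot.2 Subtype.val_injective)

lemma LD.symm {C E F : Subfield K} (hE : C ≤ E) (hF : C ≤ F) (h : LD C E F) : LD C F E :=
  ld_of_ldo hF hE (Submodule.LinearDisjoint.symm (ldo_of_ld hE hF h))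

lemma mem_span_of_adjoin {k D N : Subfield K} (hkD : k ≤ D) {b : Set K}
    (hspan : Submodule.span k b = Submodule.span k (N : Set K)) {g : K}
    (hg : g ∈ Algebra.adjoin D (N : Set K)) : g ∈ Submodule.span D b := by
  have h1 : g ∈ Submodule.span D (Submonoid.closure (N : Set K) : Set K) := by
    rw [← Algebra.adjoin_eq_span]; exact hg
  have h2 : (Submonoid.closure (N : Set K) : Set K) = N :=
    congrArg _ (Submonoid.closure_eq N.toSubmonoid)
  rw [h2] at h1
  have h3 : ∀ y ∈ Submodule.span k b, y ∈ Submodule.span D b := by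
    intro y hy
    induction hy using Submodule.span_induction with
    | mem x h => exact Submodule.subset_span h
    | zero => exact Submodule.zero_mem _
    | add x y _ _ hx hy => exact Submodule.add_mem _ hx hy
    | smul a x _ hx => exact Submodule.smul_mem _ (⟨a, hkD a.2⟩ : D) hx
  refine Submodule.span_le.2 ?_ h1
  intro y hy
  exact h3 y (by rw [hspan]; exact Submodule.subset_span hy)

lemma sup_le_adjoin (N D : Subfield K) :
    N ⊔ D ≤ (IntermediateField.adjoin D (N : Set K)).toSubfield := by
  refine sup_le (fun x hx => IntermediateField.subset_adjoin D _ hx) ?_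
  intro x hx
  exact (IntermediateField.adjoin D (N : Set K)).algebraMap_mem ⟨x, hx⟩

lemma LD.base_change {C D E F : Subfield K} (hE : C ≤ E) (hCD : C ≤ D) (hDF : D ≤ F)
    (h : LD C E F) : LD D (E ⊔ D) F := by
  classical
  intro ι f hf hli
  have h' : LD C F E := h.symm hE (hCD.trans hDF)
  obtain ⟨b, hbE, hspan, hb⟩ := exists_linearIndependent C (E : Set K)
  have hbF : LinearIndependent F ((↑) : b → K) := h' _ _ (fun i => hbE i.2) hb
  -- ring version
  have ring : ∀ (s : Finset ι) (g : ι → K), (∀ i, g i ∈ Algebra.adjoin D (E : Set K)) →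
      ∑ i ∈ s, g i * f i = 0 → ∀ i ∈ s, g i = 0 := by
    intro s g hg hsum
    have h1 : ∀ i, ∃ c : b →₀ D, Finsupp.linearCombination D ((↑) : b → K) c = g i := fun i =>
      (Finsupp.mem_span_iff_linearCombination D b (g i)).1 (mem_span_of_adjoin hCD hspan (hg i))
    choose c hc using h1
    let T : Finset b := s.biUnion fun i => (c i).support
    have hgi : ∀ i ∈ s, g i = ∑ t ∈ T, (c i t : K) * t := by
      intro i hi
      rw [← hc i, Finsupp.linearCombination_apply]
      exact Finsupp.sum_of_support_subset _
        (Finset.subset_biUnion_of_mem (fun i => (c i).support) hi) _ (by simp)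
    have h2 : ∑ t ∈ T, (∑ i ∈ s, (⟨(c i t : K) * f i, mul_mem (hDF (c i t).2) (hf i)⟩ : F))
        • (t : K) = 0 := by
      have h20 : ∑ i ∈ s, g i * f i = ∑ i ∈ s, (∑ t ∈ T, (c i t : K) * t) * f i :=
        Finset.sum_congr rfl (fun i hi => by rw [hgi i hi])
      rw [← hsum, h20]
      simp only [Finset.sum_mul]
      rw [Finset.sum_comm]
      refine Finset.sum_congr rfl fun t _ => ?_
      rw [Finset.sum_smul]
      refine Finset.sum_congr rfl fun i _ => ?_
      change (c i t : K) * f i * t = _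
      ring
    have h3 := linearIndependent_iff'.1 hbF T _ h2
    have h4 : ∀ t ∈ T, ∀ i ∈ s, c i t = 0 := by
      intro t ht
      have h5 := congrArg (Subtype.val) (h3 t ht)
      refine linearIndependent_iff'.1 hli s (fun i => c i t) ?_
      rw [← F.coe_subtype, map_sum] at h5
      exact h5
    intro i hi
    rw [hgi i hi]
    refine Finset.sum_eq_zero fun t ht => ?_
    rw [h4 t ht i hi]
    simp
  rw [linearIndependent_iff']
  intro s g hsum
  have hfr : ∀ i, ∃ r ∈ Algebra.adjoin D (E : Set K), ∃ q ∈ Algebra.adjoin D (E : Set K),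
      q ≠ 0 ∧ (g i : K) = r / q := by
    intro i
    obtain ⟨r, hr, q, hq, hrq⟩ := IntermediateField.mem_adjoin_iff_div.1
      (sup_le_adjoin E D (g i).2)
    by_cases hq0 : q = 0
    · refine ⟨0, Subalgebra.zero_mem _, 1, Subalgebra.one_mem _, one_ne_zero, ?_⟩
      rw [hrq, hq0]; simp
    · exact ⟨r, hr, q, hq, hq0, hrq⟩
  choose r hr q hq hq0 hrq using hfr
  have hQ : (∏ i ∈ s, q i) ≠ 0 := Finset.prod_ne_zero_iff.2 fun i _ => hq0 i
  have h6 : ∀ i ∈ s, (∏ j ∈ s.erase i, q j) * r i = 0 := by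
    refine ring s (fun i => (∏ j ∈ s.erase i, q j) * r i)
      (fun i => mul_mem (prod_mem fun j _ => hq j) (hr i)) ?_
    have h7 : ∑ i ∈ s, (g i : K) * f i = 0 := hsum
    have h8 : (∏ i ∈ s, q i) * ∑ i ∈ s, (g i : K) * f i = 0 := by rw [h7, mul_zero]
    rw [← h8, Finset.mul_sum]
    refine Finset.sum_congr rfl fun i hi => ?_
    rw [hrq i, ← Finset.mul_prod_erase s q hi]
    field_simp [hq0 i]
  intro i hi
  have h9 := h6 i hi
  have h10 : (∏ j ∈ s.erase i, q j) ≠ 0 := Finset.prod_ne_zero_iff.2 fun i _ => hq0 i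
  have h11 := (mul_eq_zero.1 h9).resolve_left h10
  apply Subtype.ext
  rw [hrq i, h11]
  simp

end basic


lemma place_exists {k K : Type*} [Field k] [IsAlgClosed k] [Field K] [Algebra k K]
    (B D : Subalgebra k K) (h : B.LinearDisjoint D) (d : Finset K)
    (hd : ∀ y ∈ d, y ∈ D ∧ y⁻¹ ∈ D ∧ y ≠ 0) :
    ∃ O : ValuationSubring K, (∀ b ∈ B, b ∈ O) ∧
      ∀ y ∈ d, ∃ c : k, O.valuation (y - algebraMap k K c) < 1 ∧ c ≠ 0 := by
  classical
  let R : Subalgebra k K := Algebra.adjoin k ((d ∪ d.image (·⁻¹) : Finset K) : Set K)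
  have hRD : R ≤ D := by
    refine Algebra.adjoin_le ?_
    intro x hx
    simp only [Finset.coe_union, Finset.coe_image, Set.mem_union, Finset.mem_coe,
      Set.mem_image] at hx
    rcases hx with hx | ⟨y, hy, rfl⟩
    · exact (hd x hx).1
    · exact (hd y hy).2.1
  have hR : B.LinearDisjoint R := h.of_le_right_of_flat hRD
  have hft : Algebra.FiniteType k R :=
    (Subalgebra.fg_iff_finiteType _).1 ⟨_, rfl⟩
  obtain ⟨m, hm⟩ := Ideal.exists_maximal R
  have hbij : Function.Bijective (algebraMap k (R ⧸ m)) := by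
    let _ : Field (R ⧸ m) := Ideal.Quotient.field m
    have : Module.Finite k (R ⧸ m) := finite_of_finite_type_of_isJacobsonRing k (R ⧸ m)
    exact IsAlgClosed.algebraMap_bijective_of_isIntegral
  let e : k ≃ₐ[k] (R ⧸ m) := AlgEquiv.ofBijective (Algebra.ofId k (R ⧸ m)) hbij
  let ψ : R →ₐ[k] k := e.symm.toAlgHom.comp (Ideal.Quotient.mkₐ k m)
  let φ : ↥(B ⊔ R) →ₐ[k] B :=
    (Algebra.TensorProduct.lift (AlgHom.id k B) ((Algebra.ofId k B).comp ψ)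
      (fun _ _ => Commute.all _ _)).comp (hR.mulMap.symm : ↥(B ⊔ R) →ₐ[k] _)
  have hφ : ∀ (y : K) (hy : y ∈ R), φ ⟨y, (le_sup_right : R ≤ B ⊔ R) hy⟩
      = algebraMap k B (ψ ⟨y, hy⟩) := by
    intro y hy
    have : (hR.mulMap.symm ⟨y, (le_sup_right : R ≤ B ⊔ R) hy⟩) = 1 ⊗ₜ ⟨y, hy⟩ := by
      rw [AlgEquiv.symm_apply_eq]
      ext
      simp [Subalgebra.LinearDisjoint.val_mulMap_tmul]
    simp [φ, this, Algebra.ofId_apply]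
  let J : Ideal (B ⊔ R).toSubring := RingHom.ker (φ : ↥(B ⊔ R) →+* B)
  have hJ : J ≠ ⊤ := RingHom.ker_ne_top _
  obtain ⟨O, hO, hJO⟩ := J.image_subset_nonunits_valuationSubring hJ
  refine ⟨O, fun b hb => hO ((le_sup_left : B ≤ B ⊔ R) hb), fun y hy => ?_⟩
  have hyR : y ∈ R := Algebra.subset_adjoin (by simp [hy])
  have hyR' : y⁻¹ ∈ R := Algebra.subset_adjoin (by simp [hy])
  have hlt : O.valuation (y - algebraMap k K (ψ ⟨y, hyR⟩)) < 1 := by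
    rw [← ValuationSubring.mem_nonunits_iff]
    apply hJO
    refine ⟨⟨y - algebraMap k K (ψ ⟨y, hyR⟩), sub_mem ((le_sup_right : R ≤ B ⊔ R) hyR)
      (Subalgebra.algebraMap_mem _ _)⟩, ?_, rfl⟩
    change φ _ = 0
    have : (⟨y - algebraMap k K (ψ ⟨y, hyR⟩), sub_mem ((le_sup_right : R ≤ B ⊔ R) hyR)
      (Subalgebra.algebraMap_mem _ _)⟩ : ↥(B ⊔ R)) =
      ⟨y, (le_sup_right : R ≤ B ⊔ R) hyR⟩ - algebraMap k _ (ψ ⟨y, hyR⟩) := by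
      ext; simp
    rw [this, map_sub, hφ y hyR, AlgHom.commutes, sub_self]
  refine ⟨ψ ⟨y, hyR⟩, hlt, ?_⟩
  intro h0
  rw [h0, map_zero, sub_zero] at hlt
  have h1 : O.valuation y⁻¹ ≤ 1 :=
    (O.valuation_le_one_iff _).2 (hO ((le_sup_right : R ≤ B ⊔ R) hyR'))
  have h2 : O.valuation (y * y⁻¹) < 1 := by
    rw [map_mul]
    exact mul_lt_one_of_lt_of_le hlt h1
  rw [mul_inv_cancel₀ (hd y hy).2.2, map_one] at h2
  exact lt_irrefl _ h2

section places
variable {K : Type*} [Field K] (k B D : Subfield K)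

def placeFilter : Filter (ValuationSubring K) :=
  Filter.generate {s | ∃ y ∈ D, y ≠ 0 ∧
    s = {O | (∀ b ∈ B, b ∈ O) ∧ ∃ c ∈ k, c ≠ 0 ∧ O.valuation (y - c) < 1}}

lemma placeFilter_of_mem {y : K} (hy : y ∈ D) (hy0 : y ≠ 0) :
    ∀ᶠ O in placeFilter k B D, ∃ c ∈ k, c ≠ 0 ∧ O.valuation (y - c) < 1 := by
  have : {O : ValuationSubring K | (∀ b ∈ B, b ∈ O) ∧
      ∃ c ∈ k, c ≠ 0 ∧ O.valuation (y - c) < 1} ∈ placeFilter k B D :=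
    Filter.mem_generate_of_mem ⟨y, hy, hy0, rfl⟩
  filter_upwards [this] with O hO using hO.2

lemma placeFilter_base :
    ∀ᶠ O in placeFilter k B D, ∀ b ∈ B, b ∈ O := by
  have : {O : ValuationSubring K | (∀ b ∈ B, b ∈ O) ∧
      ∃ c ∈ k, c ≠ 0 ∧ O.valuation (1 - c) < 1} ∈ placeFilter k B D :=
    Filter.mem_generate_of_mem ⟨1, D.one_mem, one_ne_zero, rfl⟩
  filter_upwards [this] with O hO using hO.1

lemma val_eq_one {O : ValuationSubring K} {B : Subfield K} (hB : ∀ b ∈ B, b ∈ O)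
    {b : K} (hb : b ∈ B) (hb0 : b ≠ 0) : O.valuation b = 1 := by
  apply le_antisymm ((O.valuation_le_one_iff _).2 (hB _ hb))
  have h1 : O.valuation b⁻¹ ≤ 1 := (O.valuation_le_one_iff _).2 (hB _ (B.inv_mem hb))
  rw [map_inv₀] at h1
  exact (inv_le_one₀ (by simpa [zero_lt_iff] using hb0)).1 h1

/-- `x` reduces to an element of `N` at the place `O`. -/
def Red (O : ValuationSubring K) (N : Subfield K) (x : K) : Prop :=
  ∃ m ∈ N, O.valuation (x - m) < 1

variable {O : ValuationSubring K} {N : Subfield K}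

lemma red_le (hN : ∀ b ∈ N, b ∈ O) {x : K} (h : Red O N x) : O.valuation x ≤ 1 := by
  obtain ⟨m, hm, h⟩ := h
  have : x = (x - m) + m := by ring
  rw [this]
  exact (O.valuation.map_add _ _).trans
    (max_le h.le ((O.valuation_le_one_iff _).2 (hN _ hm)))

lemma red_add {x y : K} (hx : Red O N x) (hy : Red O N y) : Red O N (x + y) := by
  obtain ⟨m, hm, h⟩ := hx
  obtain ⟨n, hn, h'⟩ := hy
  refine ⟨m + n, add_mem hm hn, ?_⟩
  have : x + y - (m + n) = (x - m) + (y - n) := by ring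
  rw [this]
  exact O.valuation.map_add_lt h h'

lemma red_neg {x : K} (hx : Red O N x) : Red O N (-x) := by
  obtain ⟨m, hm, h⟩ := hx
  refine ⟨-m, neg_mem hm, ?_⟩
  have : -x - -m = -(x - m) := by ring
  rw [this, Valuation.map_neg]
  exact h

lemma sub_mul_lt (hN : ∀ b ∈ N, b ∈ O) {x y m n : K} (hm : m ∈ N) (hn : n ∈ N)
    (h : O.valuation (x - m) < 1) (h' : O.valuation (y - n) < 1) :
    O.valuation (x * y - m * n) < 1 := by
  have : x * y - m * n = (x - m) * y + m * (y - n) := by ring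
  rw [this]
  have hy := red_le hN ⟨n, hn, h'⟩
  have hm' := (O.valuation_le_one_iff _).2 (hN _ hm)
  refine O.valuation.map_add_lt ?_ ?_
  · rw [map_mul]; exact mul_lt_one_of_lt_of_le h hy
  · rw [map_mul, mul_comm]; exact mul_lt_one_of_lt_of_le h' hm'

lemma red_mul (hN : ∀ b ∈ N, b ∈ O) {x y : K} (hx : Red O N x) (hy : Red O N y) :
    Red O N (x * y) := by
  obtain ⟨m, hm, h⟩ := hx
  obtain ⟨n, hn, h'⟩ := hy
  exact ⟨m * n, mul_mem hm hn, sub_mul_lt hN hm hn h h'⟩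

lemma red_inv (hN : ∀ b ∈ N, b ∈ O) {x : K} (hx : Red O N x) (hx1 : O.valuation x⁻¹ ≤ 1) :
    Red O N x⁻¹ := by
  by_cases hx0 : x = 0
  · subst hx0
    exact ⟨0, N.zero_mem, by simp⟩
  obtain ⟨m, hm, h⟩ := hx
  by_cases hm0 : m = 0
  · subst hm0
    rw [sub_zero] at h
    have h2 : O.valuation (x * x⁻¹) < 1 := by
      rw [map_mul]
      exact mul_lt_one_of_lt_of_le h hx1
    rw [mul_inv_cancel₀ hx0, map_one] at h2
    exact (lt_irrefl _ h2).elim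
  · refine ⟨m⁻¹, inv_mem hm, ?_⟩
    have : x⁻¹ - m⁻¹ = (-(x - m)) * (x⁻¹ * m⁻¹) := by field_simp; ring
    rw [this, map_mul, Valuation.map_neg, map_mul,
      val_eq_one hN (inv_mem hm) (inv_ne_zero hm0), mul_one]
    exact mul_lt_one_of_lt_of_le h hx1

end places

section places2
variable {K : Type uK} [Field K]

lemma root_red {O : ValuationSubring K} {N : Subfield K} [IsAlgClosed N]
    (hN : ∀ b ∈ N, b ∈ O) (n : ℕ) (q : ℕ → K) (hq : ∀ i ∈ Finset.range n, Red O N (q i)) (x : K)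
    (hx : x ^ n + ∑ i ∈ Finset.range n, q i * x ^ i = 0) : Red O N x := by
  have hx1 : O.valuation x ≤ 1 := by
    by_contra hlt
    rw [not_le] at hlt
    have hx0 : x ≠ 0 := by rintro rfl; simp at hlt
    have h1 : O.valuation (∑ i ∈ Finset.range n, q i * x ^ i) < O.valuation (x ^ n) := by
      apply Valuation.map_sum_lt
      · simpa using fun h => (hx0 h).elim
      · intro i hi
        rw [map_mul, map_pow, map_pow]
        calc O.valuation (q i) * O.valuation x ^ i ≤ 1 * O.valuation x ^ i :=
              mul_le_mul_left (red_le hN (hq i hi)) _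
          _ = O.valuation x ^ i := one_mul _
          _ < O.valuation x ^ n := pow_lt_pow_right₀ hlt (Finset.mem_range.1 hi)
    rw [eq_neg_of_add_eq_zero_left hx, Valuation.map_neg] at h1
    exact lt_irrefl _ h1
  have hc : ∀ i : Fin n, ∃ c : N, O.valuation (q i - c) < 1 := by
    intro i
    obtain ⟨m, hm, h⟩ := hq i (Finset.mem_range.2 i.2)
    exact ⟨⟨m, hm⟩, h⟩
  choose c hc using hc
  let p : N[X] := X ^ n + ∑ i : Fin n, C (c i) * X ^ (i : ℕ)
  have hp : p.Monic := monic_X_pow_add (degree_sum_fin_lt c)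
  have hev : O.valuation (aeval x p) < 1 := by
    have h1 : aeval x p = -∑ i : Fin n, (q i - c i) * x ^ (i : ℕ) := by
      rw [← Fin.sum_univ_eq_sum_range (fun i => q i * x ^ i)] at hx
      have h2 : aeval x p = x ^ n + ∑ i : Fin n, (c i : K) * x ^ (i : ℕ) := by
        simp only [p, map_add, map_pow, aeval_X, map_sum, map_mul, aeval_C]
        rfl
      simp only [sub_mul, Finset.sum_sub_distrib]
      rw [h2]
      linear_combination hx
    rw [h1, Valuation.map_neg]
    refine Valuation.map_sum_lt _ one_ne_zero ?_
    intro i _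
    rw [map_mul, map_pow]
    exact mul_lt_one_of_lt_of_le (hc i) (pow_le_one' hx1 _)
  have hs := (IsAlgClosed.splits p).eq_prod_roots_of_monic hp
  rw [hs, map_multiset_prod, Multiset.map_map, map_multiset_prod, Multiset.map_map] at hev
  by_contra hcon
  have : (1 : O.ValueGroup) ≤ (Multiset.map ((⇑O.valuation ∘ ⇑(aeval x)) ∘ fun a => X - C a) p.roots).prod := by
    apply Multiset.one_le_prod_of_one_le
    intro y hy
    obtain ⟨a, -, rfl⟩ := Multiset.mem_map.1 hy
    by_contra h
    apply hcon
    refine ⟨a, a.2, ?_⟩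
    rw [not_le] at h
    have h7 : aeval x (X - C a) = x - a := by
      rw [map_sub, aeval_X, aeval_C]; rfl
    rw [← h7]
    exact h
  exact absurd hev (not_lt.2 (by simpa [Function.comp_def] using this))

variable {k B D : Subfield K}

lemma ev_ring {N : Subfield K} (hkD : k ≤ D) (hkN : k ≤ N) (hNB : N ≤ B) {g : K}
    (hg : g ∈ Algebra.adjoin D (N : Set K)) (hg0 : g ≠ 0) :
    ∀ᶠ O in placeFilter k B D, ∃ m ∈ N, m ≠ 0 ∧ O.valuation (g - m) < 1 := by
  obtain ⟨b, hbN, hspan, hli⟩ := exists_linearIndependent k (N : Set K)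
  have hg1 : g ∈ Submodule.span D b := mem_span_of_adjoin hkD hspan hg
  obtain ⟨f, hf⟩ := (Finsupp.mem_span_iff_linearCombination D b g).1 hg1
  rw [Finsupp.linearCombination_apply, Finsupp.sum] at hf
  have hev : ∀ᶠ O in placeFilter k B D, ∀ i ∈ f.support,
      ∃ c ∈ k, c ≠ 0 ∧ O.valuation ((f i : K) - c) < 1 := by
    rw [Filter.eventually_all_finset]
    intro i hi
    refine placeFilter_of_mem k B D (f i).2 ?_
    simpa using hi
  filter_upwards [hev, placeFilter_base k B D] with O hO hB
  have : ∀ i : b, ∃ c : k, i ∈ f.support → (c ≠ 0 ∧ O.valuation ((f i : K) - c) < 1) := by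
    intro i
    by_cases hi : i ∈ f.support
    · obtain ⟨c, hc, h0, h⟩ := hO i hi
      exact ⟨⟨c, hc⟩, fun _ => ⟨fun h' => h0 (congrArg Subtype.val h'), h⟩⟩
    · exact ⟨0, fun h => (hi h).elim⟩
  choose c hc using this
  refine ⟨∑ i ∈ f.support, (c i : K) * i, ?_, ?_, ?_⟩
  · exact sum_mem fun i _ => mul_mem (hkN (c i).2) (hbN i.2)
  · intro h0
    have hne : f.support.Nonempty := by
      rw [Finset.nonempty_iff_ne_empty]
      rintro he
      rw [he] at hf
      exact hg0 (by simpa using hf.symm)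
    obtain ⟨i, hi⟩ := hne
    exact (hc i hi).1 (linearIndependent_iff'.1 hli f.support c h0 i hi)
  · rw [← hf, ← Finset.sum_sub_distrib]
    refine Valuation.map_sum_lt _ one_ne_zero ?_
    intro i hi
    have : f i • (i : K) - (c i : K) * i = ((f i : K) - c i) * i := by
      rw [sub_mul]; rfl
    rw [this, map_mul]
    exact mul_lt_one_of_lt_of_le (hc i hi).2
      ((O.valuation_le_one_iff _).2 (hB _ (hNB (hbN i.2))))

lemma ev_field {N : Subfield K} (hkD : k ≤ D) (hkN : k ≤ N) (hNB : N ≤ B) {y : K}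
    (hy : y ∈ N ⊔ D) : ∀ᶠ O in placeFilter k B D, Red O N y := by
  have h1 : N ⊔ D ≤ (IntermediateField.adjoin D (N : Set K)).toSubfield := by
    refine sup_le (fun x hx => IntermediateField.subset_adjoin D _ hx) ?_
    intro x hx
    exact (IntermediateField.adjoin D (N : Set K)).algebraMap_mem ⟨x, hx⟩
  obtain ⟨r, hr, s, hs, rfl⟩ := IntermediateField.mem_adjoin_iff_div.1 (h1 hy)
  by_cases hr0 : r = 0
  · subst hr0
    exact Filter.Eventually.of_forall fun O => ⟨0, N.zero_mem, by simp⟩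
  by_cases hs0 : s = 0
  · subst hs0
    exact Filter.Eventually.of_forall fun O => ⟨0, N.zero_mem, by simp⟩
  filter_upwards [ev_ring (B := B) hkD hkN hNB hr hr0, ev_ring (B := B) hkD hkN hNB hs hs0,
    placeFilter_base k B D] with O ⟨m, hm, hm0, hrm⟩ ⟨n, hn, hn0, hsn⟩ hB
  have hN : ∀ b ∈ N, b ∈ O := fun b hb => hB b (hNB hb)
  rw [div_eq_mul_inv]
  refine red_mul hN ⟨m, hm, hrm⟩ (red_inv hN ⟨n, hn, hsn⟩ ?_)
  have hn1 := val_eq_one hN hn hn0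
  have : O.valuation s = 1 := by
    have : s = (s - n) + n := by ring
    rw [this, Valuation.map_add_eq_of_lt_right _ (by rw [hn1]; exact hsn), hn1]
  rw [map_inv₀, this, inv_one]

lemma ev_alg {N : Subfield K} [IsAlgClosed N] (hkD : k ≤ D) (hkN : k ≤ N) (hNB : N ≤ B) {x : K}
    (hx : IsAlgebraic ↥(N ⊔ D) x) : ∀ᶠ O in placeFilter k B D, Red O N x := by
  let q := minpoly ↥(N ⊔ D) x
  have hev : ∀ᶠ O in placeFilter k B D, ∀ i ∈ Finset.range q.natDegree,
      Red O N (q.coeff i : K) := by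
    rw [Filter.eventually_all_finset]
    intro i hi
    exact ev_field hkD hkN hNB (q.coeff i).2
  filter_upwards [hev, placeFilter_base k B D] with O hO hB
  refine root_red (fun b hb => hB b (hNB hb)) q.natDegree (fun i => (q.coeff i : K)) hO x ?_
  have h1 : aeval x q = 0 := minpoly.aeval _ _
  have hq : q.Monic := minpoly.monic hx.isIntegral
  rw [hq.as_sum] at h1
  simp only [map_add, map_pow, aeval_X, map_sum, map_mul, aeval_C] at h1
  exact h1

lemma ev_sup {ι : Type*} {s : Set ι} {N L : ι → Subfield K} [IsAlgClosed B]
    [∀ i, IsAlgClosed (N i)] (hkD : k ≤ D) (hkN : ∀ i, k ≤ N i) (hkB : k ≤ B)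
    (hNB : ∀ i ∈ s, N i ≤ B)
    (hL : ∀ i ∈ s, ∀ x ∈ L i, IsAlgebraic ↥(N i ⊔ D) x) {x : K} (hx : x ∈ ⨆ i ∈ s, L i) :
    ∀ᶠ O in placeFilter k B D, Red O (⨆ i ∈ s, N i) x := by
  have hMB : (⨆ i ∈ s, N i) ≤ B := iSup₂_le hNB
  have key : ∀ x ∈ ⨆ i ∈ s, L i, IsAlgebraic ↥(B ⊔ D) x := by
    have : (⨆ i ∈ s, L i) ≤ algCl (B ⊔ D) := by
      refine iSup₂_le fun i hi x hx => ?_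
      exact algCl_mono (sup_le_sup_right (hNB i hi) _) (mem_algCl.2 (hL i hi x hx))
    intro x hx
    exact mem_algCl.1 (this hx)
  have hcl : (⨆ i ∈ s, L i) = Subfield.closure (⋃ i ∈ s, (L i : Set K)) := by
    simp only [Subfield.closure_iUnion, Subfield.closure_eq]
  rw [hcl] at hx
  induction hx using Subfield.closure_induction with
  | mem x hx =>
    obtain ⟨i, hi, hx⟩ := Set.mem_iUnion₂.1 hx
    filter_upwards [ev_alg hkD (hkN i) (hNB i hi) (hL i hi x hx)] with O ⟨m, hm, h⟩
    exact ⟨m, (le_iSup₂_of_le (f := fun i _ => N i) i hi le_rfl) hm, h⟩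
  | one => exact Filter.Eventually.of_forall fun O => ⟨1, Subfield.one_mem _, by simp⟩
  | add x y _ _ hx hy => filter_upwards [hx, hy] with O h h' using red_add h h'
  | neg x _ hx => filter_upwards [hx] with O h using red_neg h
  | inv x hx ih =>
    rw [← hcl] at hx
    filter_upwards [ih, ev_alg hkD hkB le_rfl (key _ (inv_mem hx)), placeFilter_base k B D]
      with O h h' hB
    exact red_inv (fun b hb => hB b (hMB hb)) h (red_le hB h')
  | mul x y _ _ hx hy =>
    filter_upwards [hx, hy, placeFilter_base k B D] with O h h' hB
      using red_mul (fun b hb => hB b (hMB hb)) h h'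

lemma first_ld {ι : Type*} {s : Set ι} {N L : ι → Subfield K} [IsAlgClosed B]
    [∀ i, IsAlgClosed (N i)] (hkD : k ≤ D) (hkN : ∀ i, k ≤ N i) (hkB : k ≤ B)
    (hNB : ∀ i ∈ s, N i ≤ B)
    (hL : ∀ i ∈ s, ∀ x ∈ L i, IsAlgebraic ↥(N i ⊔ D) x)
    (hne : (placeFilter k B D).NeBot) :
    LD (⨆ i ∈ s, N i) (⨆ i ∈ s, L i) B := by
  intro κ b hb hli
  have hMB : (⨆ i ∈ s, N i) ≤ B := iSup₂_le hNB
  rw [linearIndependent_iff']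
  intro r f hf
  by_contra hcon
  push Not at hcon
  obtain ⟨j, hjr, hj⟩ := hcon
  have hj' : (f j : K) ≠ 0 := fun h => hj (Subtype.ext h)
  have hev : ∀ᶠ O in placeFilter k B D, ∀ i ∈ r, Red O (⨆ i ∈ s, N i) ((f i : K) / f j) := by
    rw [Filter.eventually_all_finset]
    intro i _
    exact ev_sup hkD hkN hkB hNB hL (div_mem (f i).2 (f j).2)
  obtain ⟨O, hO, hB⟩ := (hev.and (placeFilter_base k B D)).exists
  have hc : ∀ i, ∃ m : ↥(⨆ i ∈ s, N i), i ∈ r → O.valuation ((f i : K) / f j - m) < 1 := by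
    intro i
    by_cases hi : i ∈ r
    · obtain ⟨m, hm, h⟩ := hO i hi
      exact ⟨⟨m, hm⟩, fun _ => h⟩
    · exact ⟨0, fun h => (hi h).elim⟩
  choose m hm using hc
  have hsum : ∑ i ∈ r, m i • b i = 0 := by
    by_contra h0
    have h1 : (∑ i ∈ r, m i • b i) ∈ B :=
      sum_mem fun i _ => mul_mem (hMB (m i).2) (hb i)
    have h2 := val_eq_one hB h1 h0
    have h3 : ∑ i ∈ r, m i • b i = -∑ i ∈ r, ((f i : K) / f j - m i) * b i := by
      have h4 : ∑ i ∈ r, (f i : K) / f j * b i = 0 := by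
        have : ∑ i ∈ r, (f i : K) * b i = 0 := hf
        simp only [div_mul_eq_mul_div, ← Finset.sum_div, this, zero_div]
      simp only [sub_mul, Finset.sum_sub_distrib, h4]
      rw [zero_sub, neg_neg]; rfl
    have h5 : O.valuation (∑ i ∈ r, m i • b i) < 1 := by
      rw [h3, Valuation.map_neg]
      refine Valuation.map_sum_lt _ one_ne_zero ?_
      intro i hi
      rw [map_mul]
      exact mul_lt_one_of_lt_of_le (hm i hi) ((O.valuation_le_one_iff _).2 (hB _ (hb i)))
    exact h5.ne h2
  have := linearIndependent_iff'.1 hli r m hsum j hjr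
  have h6 := hm j hjr
  rw [this, div_self hj'] at h6
  simp at h6

end places2

section main
variable {K : Type uK} [Field K]

lemma placeFilter_neBot {k B D : Subfield K} [IsAlgClosed k] (hkB : k ≤ B) (hkD : k ≤ D)
    (h : LinearDisjointOver k B D) : (placeFilter k B D).NeBot := by
  classical
  rw [placeFilter, Filter.generate_neBot_iff]
  intro t ht hfin
  have h1 : ∀ s : t, ∃ y ∈ D, y ≠ 0 ∧ (s : Set (ValuationSubring K)) =
      {O | (∀ b ∈ B, b ∈ O) ∧ ∃ c ∈ k, c ≠ 0 ∧ O.valuation (y - c) < 1} := fun s => ht s.2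
  choose y hy hy0 hs using h1
  have : Fintype t := hfin.fintype
  obtain ⟨O, hO, hO'⟩ := place_exists (subAlg hkB) (subAlg hkD) ((ldo_iff hkB hkD).1 h)
    (Finset.univ.image y) (by
      intro z hz
      obtain ⟨s, -, rfl⟩ := Finset.mem_image.1 hz
      exact ⟨hy s, D.inv_mem (hy s), hy0 s⟩)
  refine ⟨O, fun s hst => ?_⟩
  have h2 := hs ⟨s, hst⟩
  change s = _ at h2
  rw [h2]
  obtain ⟨c, hc, hc0⟩ := hO' (y ⟨s, hst⟩) (Finset.mem_image_of_mem _ (Finset.mem_univ _))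
  exact ⟨hO, c, c.2, fun h => hc0 (Subtype.ext h), hc⟩

lemma invCl_self (σ : K ≃+* K) (A : Subfield K) (hA : A.map (σ : K →+* K) = A) :
    invCl σ A = A := by
  apply le_antisymm
  · refine sInf_le ⟨le_rfl, fun x hx => ?_, fun x hx => ?_⟩
    · rw [← hA]; exact ⟨x, hx, rfl⟩
    · rw [← hA] at hx
      obtain ⟨y, hy, rfl⟩ := hx
      simpa using hy
  · exact le_sInf fun F hF => hF.1

lemma le_invCl (σ : K ≃+* K) (E : Subfield K) : E ≤ invCl σ E :=
  le_sInf fun _ hF => hF.1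

variable {σ : K ≃+* K} {V : Type*} [Fintype V] [DecidableEq V] {A : Subfield K}

lemma S_le_algCl (𝒮 : DiffFieldSystem σ V A) (u : Finset V) :
    𝒮.S u ≤ algCl (A ⊔ ⨆ i ∈ u, 𝒮.S {i}) := by
  induction u using Finset.strongInduction with
  | H u ih =>
    by_cases hc : 2 ≤ u.card
    · obtain ⟨hle, hfin, -⟩ := 𝒮.galois u hc
      let _ : Algebra ↥(⨆ v ∈ u.powerset.erase u, 𝒮.S v) (𝒮.S u) :=
        (Subfield.inclusion hle).toAlgebra
      have hst : IsScalarTower ↥(⨆ v ∈ u.powerset.erase u, 𝒮.S v) (𝒮.S u) K :=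
        IsScalarTower.of_algebraMap_eq fun _ => rfl
      have hsub : (⨆ v ∈ u.powerset.erase u, 𝒮.S v) ≤ algCl (A ⊔ ⨆ i ∈ u, 𝒮.S {i}) := by
        refine iSup₂_le fun v hv => ?_
        rw [Finset.mem_erase, Finset.mem_powerset] at hv
        refine (ih v (hv.2.ssubset_of_ne hv.1)).trans (algCl_mono ?_)
        refine sup_le_sup_left ?_ _
        exact iSup₂_le fun i hi => le_iSup₂_of_le (f := fun i (_ : i ∈ u) => 𝒮.S {i}) i (hv.2 hi) le_rfl
      intro x hx
      apply algCl_algCl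
      apply algCl_mono hsub
      rw [mem_algCl]
      have hfin' : FiniteDimensional ↥(⨆ v ∈ u.powerset.erase u, 𝒮.S v) (𝒮.S u) := hfin
      have h1 : IsAlgebraic ↥(⨆ v ∈ u.powerset.erase u, 𝒮.S v) (⟨x, hx⟩ : 𝒮.S u) :=
        Algebra.IsAlgebraic.isAlgebraic _
      exact h1.algebraMap (A := K)
    · refine le_trans ?_ (le_algCl _)
      have : u.card = 0 ∨ u.card = 1 := by omega
      rcases this with h | h
      · rw [Finset.card_eq_zero] at h
        subst h
        rw [𝒮.empty_eq]
        exact le_sup_left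
      · obtain ⟨i, rfl⟩ := Finset.card_eq_one.1 h
        exact le_sup_of_le_right
          (le_iSup₂_of_le (f := fun j (_ : j ∈ ({i} : Finset V)) => 𝒮.S {j}) i (by simp) le_rfl)

lemma indep_compl (hAinv : A.map (σ : K →+* K) = A) (𝒮 : DiffFieldSystem σ V A) (u : Finset V) :
    LinearDisjointOver (algCl A) (algCl (𝒮.S u)) (algCl (𝒮.S uᶜ)) := by
  have h := 𝒮.indep u uᶜ disjoint_compl_right
  unfold IndependentOver at h
  rw [invCl_self σ A hAinv] at h
  have hle : ∀ w : Finset V, algCl (𝒮.S w) ≤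
      algCl (invCl σ ((A ⊔ ⨆ i ∈ w, 𝒮.S {i}) ⊔ A)) := fun w =>
    ((algCl_mono (S_le_algCl 𝒮 w)).trans (algCl_algCl _)).trans
      (algCl_mono (le_sup_left.trans (le_invCl _ _)))
  exact Submodule.LinearDisjoint.of_le_of_flat_left h
    (Submodule.span_mono (hle u)) (Submodule.span_mono (hle uᶜ))

lemma step_ld [IsAlgClosed K] (hAinv : A.map (σ : K →+* K) = A) (𝒮 : DiffFieldSystem σ V A)
    (hreg : 𝒮.Regular) (I : Set (Finset V)) (hdown : ∀ u ∈ I, ∀ v, v ⊆ u → v ∈ I)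
    (u : Finset V) (hu0 : u ≠ ∅) (huI : u ∉ I) (hmin : ∀ v, v ⊂ u → v ∈ I) :
    LD (⨆ v ∈ I, 𝒮.S v) (𝒮.S u ⊔ ⨆ v ∈ I, 𝒮.S v) (⨆ v ∈ I, algCl (𝒮.S v)) := by
  have hAS : ∀ w, A ≤ 𝒮.S w := fun w => by
    exact 𝒮.empty_eq.symm.le.trans (𝒮.mono (Finset.empty_subset _))
  have hk : ∀ w, algCl A ≤ algCl (𝒮.S w) := fun w => algCl_mono (hAS w)
  have _ := isAlgClosed_algCl A
  have _ := isAlgClosed_algCl (𝒮.S u)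
  have _ : ∀ v, IsAlgClosed (algCl (𝒮.S (v ∩ u))) := fun v => isAlgClosed_algCl _
  have h1 : LD (⨆ v ∈ I, algCl (𝒮.S (v ∩ u))) (⨆ v ∈ I, algCl (𝒮.S v)) (algCl (𝒮.S u)) := by
    refine first_ld (k := algCl A) (D := algCl (𝒮.S uᶜ)) (hk _) (fun v => hk _) (hk _)
      (fun v _ => algCl_mono (𝒮.mono Finset.inter_subset_right)) ?_
      (placeFilter_neBot (hk _) (hk _) (indep_compl hAinv 𝒮 u))
    intro v _ x hx
    rw [← mem_algCl]
    refine (algCl_mono ?_) (algCl_algCl _ (algCl_mono (S_le_algCl 𝒮 v) hx))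
    refine sup_le (le_sup_of_le_left ((hAS _).trans (le_algCl _))) (iSup₂_le fun i hi => ?_)
    by_cases hiu : i ∈ u
    · exact le_sup_of_le_left ((𝒮.mono (by simp [hi, hiu])).trans (le_algCl _))
    · exact le_sup_of_le_right ((𝒮.mono (by simp [hiu])).trans (le_algCl _))
  have h2 : (⨆ v ∈ I, algCl (𝒮.S (v ∩ u))) = ⨆ v ∈ u.powerset.erase u, algCl (𝒮.S v) := by
    apply le_antisymm
    · refine iSup₂_le fun v hv => ?_
      refine le_iSup₂_of_le (f := fun v (_ : v ∈ u.powerset.erase u) => algCl (𝒮.S v))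
        (v ∩ u) ?_ le_rfl
      rw [Finset.mem_erase, Finset.mem_powerset]
      refine ⟨fun h => huI (hdown v hv u ?_), Finset.inter_subset_right⟩
      rw [← h]; exact Finset.inter_subset_left
    · refine iSup₂_le fun v hv => ?_
      rw [Finset.mem_erase, Finset.mem_powerset] at hv
      refine le_iSup₂_of_le (f := fun v (_ : v ∈ I) => algCl (𝒮.S (v ∩ u)))
        v (hmin v (hv.2.ssubset_of_ne hv.1)) ?_
      rw [Finset.inter_eq_left.2 hv.2]
  rw [h2] at h1
  have hmL : 𝒮.Sminus u ≤ ⨆ v ∈ u.powerset.erase u, algCl (𝒮.S v) :=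
    iSup₂_mono fun v _ => le_algCl _
  have hmS : 𝒮.Sminus u ≤ 𝒮.S u := iSup₂_le fun v hv => 𝒮.mono (by
    rw [Finset.mem_erase, Finset.mem_powerset] at hv; exact hv.2)
  have h3 : LD (𝒮.Sminus u) (⨆ v ∈ u.powerset.erase u, algCl (𝒮.S v)) (𝒮.S u) :=
    (ld_of_ldo hmS hmL (hreg u hu0)).symm hmS hmL
  have h4 : LD (𝒮.Sminus u) (⨆ v ∈ I, algCl (𝒮.S v)) (𝒮.S u) := fun ι f hf hli =>
    h1 ι f (fun i => le_algCl _ (hf i)) (h3 ι f hf hli)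
  have hmI : 𝒮.Sminus u ≤ ⨆ v ∈ I, 𝒮.S v := by
    refine iSup₂_le fun v hv => ?_
    rw [Finset.mem_erase, Finset.mem_powerset] at hv
    exact le_iSup₂_of_le (f := fun v (_ : v ∈ I) => 𝒮.S v)
        v (hmin v (hv.2.ssubset_of_ne hv.1)) le_rfl
  have hSL : (⨆ v ∈ I, 𝒮.S v) ≤ ⨆ v ∈ I, algCl (𝒮.S v) := iSup₂_mono fun v _ => le_algCl _
  exact (h4.symm (hmI.trans hSL) hmS).base_change hmS hmI hSL

lemma down_ld [IsAlgClosed K] (hAinv : A.map (σ : K →+* K) = A) (𝒮 : DiffFieldSystem σ V A)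
    (hreg : 𝒮.Regular) (n : ℕ) : ∀ (I : Set (Finset V)), (Iᶜ).ncard = n → ∅ ∈ I →
    (∀ u ∈ I, ∀ v, v ⊆ u → v ∈ I) →
    LD (⨆ v ∈ I, 𝒮.S v) (𝒮.S Finset.univ) (⨆ v ∈ I, algCl (𝒮.S v)) := by
  induction n with
  | zero =>
    intro I hn h0 hdown
    have hI : I = Set.univ := by
      rw [Set.ncard_eq_zero] at hn
      exact Set.compl_empty_iff.1 hn
    have : (⨆ v ∈ I, 𝒮.S v) = 𝒮.S Finset.univ := by
      apply le_antisymm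
      · exact iSup₂_le fun v _ => 𝒮.mono (Finset.subset_univ v)
      · exact le_iSup₂_of_le (f := fun v (_ : v ∈ I) => 𝒮.S v) Finset.univ (by simp [hI]) le_rfl
    rw [this]
    exact fun _ _ _ h => h
  | succ n ih =>
    intro I hn h0 hdown
    have hne : (Iᶜ).Nonempty := by
      apply Set.nonempty_of_ncard_ne_zero; omega
    obtain ⟨u, huI, hmin⟩ := WellFounded.has_min (wellFounded_lt (α := Finset V)) _ hne
    have hmin' : ∀ v, v ⊂ u → v ∈ I := fun v hv => by
      by_contra h
      exact hmin v h hv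
    have hu0 : u ≠ ∅ := by rintro rfl; exact huI h0
    have h1 := step_ld hAinv 𝒮 hreg I hdown u hu0 huI hmin'
    have h2 := ih (insert u I) (by
      have : (insert u I)ᶜ = Iᶜ \ {u} := by
        ext v; simp [and_comm]
      rw [this, Set.ncard_sdiff_singleton_of_mem huI, hn]; rfl) (Set.mem_insert_of_mem _ h0) (by
      intro w hw v hv
      rcases hw with rfl | hw
      · by_cases h : v = w
        · exact Or.inl h
        · exact Or.inr (hmin' v (hv.ssubset_of_ne h))
      · exact Or.inr (hdown w hw v hv))
    rw [iSup_insert, iSup_insert] at h2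
    exact fun ι f hf hli => h2 ι f (fun i => (le_sup_right :
      (⨆ v ∈ I, algCl (𝒮.S v)) ≤ algCl (𝒮.S u) ⊔ ⨆ v ∈ I, algCl (𝒮.S v)) (hf i)) (h1 ι f hf hli)

end main

/-- (Second linear disjointness lemma for regular systems.) If `𝒮`
is a regular system of difference fields on `V` over `A` and `I` is any
collection of subsets of `V`, then `S(V)` is linearly disjoint from
`∏_{v ∈ I} S(v)^{alg}` over `∏_{v ∈ I} S(v)`. -/
theorem regular_second_linear_disjointness
    {K : Type*} [Field K] [IsAlgClosed K] (σ : K ≃+* K)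
    {V : Type*} [Fintype V] [DecidableEq V]
    (A : Subfield K) (hAperf : PerfectField A) (hAinv : A.map (σ : K →+* K) = A)
    (𝒮 : DiffFieldSystem σ V A) (hreg : 𝒮.Regular)
    (I : Set (Finset V)) :
    LinearDisjointOver
      (⨆ v ∈ I, 𝒮.S v)
      (𝒮.S Finset.univ)
      (⨆ v ∈ I, algCl (𝒮.S v)) := by
  rcases I.eq_empty_or_nonempty with rfl | hne
  · simp only [Set.mem_empty_iff_false, iSup_false, iSup_bot]
    have h1 : Submodule.span (⊥ : Subfield K) ((⊥ : Subfield K) : Set K) ≤ 1 :=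
      Submodule.span_le.2 fun x hx => Submodule.mem_one.2 ⟨⟨x, hx⟩, rfl⟩
    unfold LinearDisjointOver
    exact Submodule.LinearDisjoint.of_right_le_one_of_flat _ _ h1
  · let J : Set (Finset V) := {w | ∃ v ∈ I, w ⊆ v}
    have h1 : ∀ f : Finset V → Subfield K, (∀ u v, u ⊆ v → f u ≤ f v) →
        (⨆ v ∈ I, f v) = ⨆ v ∈ J, f v := by
      intro f hf
      apply le_antisymm
      · exact iSup₂_le fun v hv =>
          le_iSup₂_of_le (f := fun v (_ : v ∈ J) => f v) v ⟨v, hv, subset_rfl⟩ le_rfl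
      · rintro x
        refine fun hx => (iSup₂_le (a := ⨆ v ∈ I, f v) ?_ : (⨆ v ∈ J, f v) ≤ _) hx
        rintro w ⟨v, hv, hw⟩
        exact le_iSup₂_of_le (f := fun v (_ : v ∈ I) => f v) v hv (hf _ _ hw)
    rw [h1 𝒮.S fun _ _ h => 𝒮.mono h, h1 (fun v => algCl (𝒮.S v)) fun _ _ h => algCl_mono (𝒮.mono h)]
    refine ldo_of_ld (iSup₂_le fun v _ => 𝒮.mono (Finset.subset_univ v))
      (iSup₂_mono fun v _ => le_algCl _) ?_
    obtain ⟨v, hv⟩ := hne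
    refine down_ld hAinv 𝒮 hreg _ J rfl ⟨v, hv, Finset.empty_subset _⟩ ?_
    rintro u ⟨w, hw, huw⟩ v hvu
    exact ⟨w, hw, hvu.trans huw⟩
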